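/- arXiv:2404.11362 — 3 statements merged into one kernel-verified Lean document; each statement's English description precedes it below -/
import Mathlib

section
/- Let N ≥ 3, m > 0, and let f : ℝ → ℝ be continuous with f(0) = 0, lim_{s→0} f(s)/s = 0, and |f(s)| ≤ C(|s| + |s|^{(N+2)/(N-2)}) for all s and some constant C > 0. Set F(s) = ∫₀^s f(t) dt. Suppose u : ℝ^N → ℝ is continuously differentiable, u and |∇u| belong to L²(ℝ^N), F(u) ∈ L¹(ℝ^N), and u is a weak solution of −Δu + m u = f(u), i.e. ∫ ⟨∇u, ∇φ⟩ + m ∫ u φ = ∫ f(u) φ for every smooth compactly supported φ : ℝ^N → ℝ. Then u satisfies the Pohozaev identity P_m(u) = 0, where P_m(u) = ((N−2)/2) ∫ |∇u|² + (N m/2) ∫ u² − N ∫ F(u). -/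
open MeasureTheory Filter Set Real
open scoped RealInnerProductSpace

noncomputable section

/-- The primitive `F(s) = ∫₀ˢ f(t) dt`. -/
def primF (f : ℝ → ℝ) (s : ℝ) : ℝ := ∫ t in (0:ℝ)..s, f t

/-!
The stress-energy tensor `∇u ⊗ ∇u - (‖∇u‖² / 2 - G) I` of `-Δu = g`, where `∇G = g ∇u`, is weakly
divergence free, and an integrable weakly divergence free field has zero integral. The Pohozaev
identity is the trace of the resulting matrix equation, with `g = f(u) - m u` and
`G = F(u) - m u² / 2`. Since `u` is only `C¹`, the multiplier `∂_b u` is replaced by symmetric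
difference quotients, which are admissible after extending the weak formulation to `C¹` test
functions by mollification.
-/

open scoped Convolution ContDiff Gradient Topology

section Gradient

variable {E : Type*} [NormedAddCommGroup E] [InnerProductSpace ℝ E] [CompleteSpace E]

lemma continuous_gradient {u : E → ℝ} (hu : ContDiff ℝ 1 u) : Continuous (∇ u) :=
  (InnerProductSpace.toDual ℝ E).symm.continuous.comp (hu.continuous_fderiv one_ne_zero)

lemma support_gradient_subset (u : E → ℝ) : Function.support (∇ u) ⊆ tsupport u :=
  (Function.support_comp_subset (map_zero (InnerProductSpace.toDual ℝ E).symm) _).trans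
    (support_fderiv_subset ℝ)

lemma hasCompactSupport_gradient {u : E → ℝ} (hu : HasCompactSupport u) :
    HasCompactSupport (∇ u) :=
  hu.mono' (support_gradient_subset u)

lemma gradient_comp_add_right (u : E → ℝ) (v x : E) :
    ∇ (fun y => u (y + v)) x = ∇ u (x + v) := by
  simp only [gradient, fderiv_comp_add_right]

lemma gradient_comp_smul (u : E → ℝ) (c : ℝ) (x : E) :
    ∇ (fun y => u (c • y)) x = c • ∇ u (c • x) := by
  simp only [gradient, fderiv_comp_smul, map_smul]

lemma gradient_mul {u v : E → ℝ} {x : E} (hu : DifferentiableAt ℝ u x)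
    (hv : DifferentiableAt ℝ v x) :
    ∇ (fun y => u y * v y) x = u x • ∇ v x + v x • ∇ u x := by
  simp only [gradient, fderiv_fun_mul hu hv, map_add, map_smul]

lemma gradient_sub {u v : E → ℝ} {x : E} (hu : DifferentiableAt ℝ u x)
    (hv : DifferentiableAt ℝ v x) :
    ∇ (fun y => u y - v y) x = ∇ u x - ∇ v x := by
  simp only [gradient, fderiv_fun_sub hu hv, map_sub]

lemma gradient_mul_symmetric_difference {u ψ : E → ℝ} (hu : Differentiable ℝ u)
    (hψ : Differentiable ℝ ψ) (v x : E) :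
    ∇ (fun y => ψ y * (u (y + v) - u (y + -v))) x =
      ψ x • (∇ u (x + v) - ∇ u (x + -v)) + (u (x + v) - u (x + -v)) • ∇ ψ x := by
  have hshift : ∀ w : E, DifferentiableAt ℝ (fun y => u (y + w)) x := fun w =>
    (hu.comp (differentiable_id.add_const w)) x
  rw [gradient_mul (hψ x) ((hshift v).fun_sub (hshift (-v))), gradient_sub (hshift v) (hshift (-v)),
    gradient_comp_add_right, gradient_comp_add_right]

lemma hasGradientAt_comp {Φ : ℝ → ℝ} {d : ℝ} {u : E → ℝ} {x : E} (hΦ : HasDerivAt Φ d (u x))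
    (hu : DifferentiableAt ℝ u x) : HasGradientAt (fun y => Φ (u y)) (d • ∇ u x) x := by
  rw [hasGradientAt_iff_hasFDerivAt, map_smul, toDual_gradient]
  exact hΦ.comp_hasFDerivAt x hu.hasFDerivAt

lemma contDiff_one_of_hasGradientAt {u : E → ℝ} {u' : E → E}
    (hu : ∀ x, HasGradientAt u (u' x) x) (hu' : Continuous u') : ContDiff ℝ 1 u :=
  contDiff_one_iff_hasFDerivAt.2 ⟨_, (InnerProductSpace.toDual ℝ E).continuous.comp hu',
    fun x => hasGradientAt_iff_hasFDerivAt.1 (hu x)⟩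

lemma gradient_inner_right (a x : E) : ∇ (fun y => ⟪a, y⟫) x = a := by
  refine ext_inner_right ℝ fun e => ?_
  rw [inner_gradient_left]
  exact congrArg (· e) (innerSL ℝ a).fderiv

lemma exists_contDiff_gradient_zero_eq [FiniteDimensional ℝ E] (a : E) :
    ∃ ψ : E → ℝ, ContDiff ℝ ∞ ψ ∧ HasCompactSupport ψ ∧ ∇ ψ 0 = a := by
  let η : ContDiffBump (0 : E) := ⟨1, 2, one_pos, one_lt_two⟩
  have hψ : ContDiff ℝ ∞ fun x : E => η x * ⟪a, x⟫ :=
    η.contDiff.mul (contDiff_const.inner ℝ contDiff_id)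
  refine ⟨fun x => η x * ⟪a, x⟫, hψ, η.hasCompactSupport.mul_right, ?_⟩
  have heq : (fun x : E => η x * ⟪a, x⟫) =ᶠ[𝓝 0] fun x => ⟪a, x⟫ := by
    filter_upwards [η.eventuallyEq_one] with x hx
    simp only [hx, Pi.one_apply, one_mul]
  rw [heq.gradient_eq, gradient_inner_right]

end Gradient

section InnerCompactSupport

variable {X F : Type*} [TopologicalSpace X] [MeasurableSpace X] [OpensMeasurableSpace X]
  [NormedAddCommGroup F] [InnerProductSpace ℝ F] {μ : Measure X} [IsFiniteMeasureOnCompacts μ]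

lemma integrable_inner_of_hasCompactSupport {w χ : X → F} (hw : Continuous w)
    (hχ : Continuous χ) (hχs : HasCompactSupport χ) : Integrable (fun x => ⟪w x, χ x⟫) μ :=
  (hw.inner hχ).integrable_of_hasCompactSupport <|
    hχs.mono fun x hx h0 => hx (by simp only [h0, inner_zero_right])

end InnerCompactSupport

section IntegralGradient

variable {E : Type*} [NormedAddCommGroup E] [InnerProductSpace ℝ E] [FiniteDimensional ℝ E]
  [MeasurableSpace E] [BorelSpace E] {μ : Measure E} {φ : E → ℝ}

lemma integrable_inner_gradient [IsFiniteMeasureOnCompacts μ] (hφ : ContDiff ℝ 1 φ)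
    (hφs : HasCompactSupport φ) (b : E) : Integrable (fun x => ⟪∇ φ x, b⟫) μ :=
  ((continuous_gradient hφ).integrable_of_hasCompactSupport
    (hasCompactSupport_gradient hφs)).inner_const b

lemma integral_inner_gradient_eq_zero [μ.IsAddHaarMeasure] (hφ : ContDiff ℝ 1 φ)
    (hφs : HasCompactSupport φ) (b : E) : ∫ x, ⟪∇ φ x, b⟫ ∂μ = 0 := by
  have hibp := integral_mul_fderiv_eq_neg_fderiv_mul_of_integrable (μ := μ) (f := fun _ => (1 : ℝ))
    (g := φ) (v := b) (by simp) (by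
      simpa only [one_mul, inner_gradient_left] using integrable_inner_gradient hφ hφs b)
    (by simpa only [one_mul] using hφ.continuous.integrable_of_hasCompactSupport hφs)
    (fun _ _ => differentiableAt_const _) (fun x _ => hφ.differentiable one_ne_zero x)
  simpa [inner_gradient_left] using hibp

lemma gradient_convolution [SFinite μ] [μ.IsAddLeftInvariant] {ρ : E → ℝ}
    (hρ : LocallyIntegrable ρ μ) (hφ : ContDiff ℝ 1 φ) (hφs : HasCompactSupport φ) (x : E) :
    ∇ (ρ ⋆[ContinuousLinearMap.lsmul ℝ ℝ, μ] φ) x =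
      (ρ ⋆[ContinuousLinearMap.lsmul ℝ ℝ, μ] ∇ φ) x := by
  refine ext_inner_right ℝ fun e => ?_
  have hint : Integrable (fun t => ρ t • ∇ φ (x - t)) μ :=
    (hasCompactSupport_gradient hφs).convolutionExists_right (ContinuousLinearMap.lsmul ℝ ℝ) hρ
      (continuous_gradient hφ) x
  have hderiv := hφs.hasFDerivAt_convolution_right (ContinuousLinearMap.lsmul ℝ ℝ) hρ hφ x
  rw [inner_gradient_left, hderiv.fderiv,
    convolution_precompR_apply _ hρ (hφs.fderiv ℝ) (hφ.continuous_fderiv one_ne_zero)]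
  simp only [convolution_def, ContinuousLinearMap.lsmul_apply]
  rw [real_inner_comm, ← integral_inner hint]
  simp only [inner_smul_right, inner_gradient_right, smul_eq_mul, conj_trivial]

end IntegralGradient

section Mollification

variable {E F : Type*} [NormedAddCommGroup E] [NormedSpace ℝ E] [FiniteDimensional ℝ E]
  [MeasurableSpace E] [BorelSpace E] {μ : Measure E} [μ.IsAddHaarMeasure] [NormedAddCommGroup F]

lemma norm_normed_convolution_le_indicator [NormedSpace ℝ F] [CompleteSpace F]
    (φ : ContDiffBump (0 : E)) {r M : ℝ} (hφ : φ.rOut ≤ r) {χ : E → F} (hχ : Continuous χ)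
    (hM : ∀ x, ‖χ x‖ ≤ M) (x : E) :
    ‖(φ.normed μ ⋆[ContinuousLinearMap.lsmul ℝ ℝ, μ] χ) x‖ ≤
      (Metric.cthickening r (tsupport χ)).indicator (fun _ => M) x := by
  rw [← dist_zero_right]
  have hM0 : 0 ≤ M := (norm_nonneg _).trans (hM x)
  refine dist_convolution_le (indicator_nonneg (fun _ _ => hM0) x) φ.support_normed_eq.subset
    φ.nonneg_normed φ.integral_normed hχ.aestronglyMeasurable fun y hy => ?_
  rw [dist_zero_right]
  by_cases hx : x ∈ Metric.cthickening r (tsupport χ)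
  · simpa only [indicator_of_mem hx] using hM y
  · have hχy : χ y = 0 := by
      refine image_eq_zero_of_notMem_tsupport fun hmem => hx ?_
      exact Metric.mem_cthickening_of_dist_le x y r _ hmem (((Metric.mem_ball'.1 hy).le).trans hφ)
    rw [hχy, norm_zero, indicator_of_notMem hx]

lemma tendsto_integral_inner_normed_convolution [InnerProductSpace ℝ F] [CompleteSpace F]
    {ι : Type*} {l : Filter ι} [l.IsCountablyGenerated] {φ : ι → ContDiffBump (0 : E)}
    (hφ : Tendsto (fun i => (φ i).rOut) l (𝓝 0)) {w χ : E → F} (hw : Continuous w)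
    (hχ : Continuous χ) (hχs : HasCompactSupport χ) :
    Tendsto (fun i => ∫ x, ⟪w x, ((φ i).normed μ ⋆[ContinuousLinearMap.lsmul ℝ ℝ, μ] χ) x⟫ ∂μ) l
      (𝓝 (∫ x, ⟪w x, χ x⟫ ∂μ)) := by
  obtain ⟨M, hM⟩ := hχs.exists_bound_of_continuous hχ
  set K := Metric.cthickening 1 (tsupport χ)
  have hK : IsCompact K := hχs.isCompact.cthickening
  refine tendsto_integral_filter_of_dominated_convergence
    (K.indicator fun x => ‖w x‖ * M) ?_ ?_ ?_ ?_
  · refine Eventually.of_forall fun i => (hw.inner ?_).aestronglyMeasurable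
    exact (φ i).hasCompactSupport_normed.continuous_convolution_left _ (φ i).continuous_normed
      hχ.locallyIntegrable
  · filter_upwards [hφ.eventually_le_const one_pos] with i hi
    refine Eventually.of_forall fun x => (norm_inner_le_norm _ _).trans ?_
    rw [indicator_mul_right]
    gcongr
    exact norm_normed_convolution_le_indicator (φ i) hi hχ hM x
  · rw [integrable_indicator_iff hK.measurableSet]
    exact (hw.norm.mul continuous_const).continuousOn.integrableOn_compact hK
  · exact Eventually.of_forall fun x => tendsto_const_nhds.inner
      (ContDiffBump.convolution_tendsto_right_of_continuous hφ hχ x)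

end Mollification

lemma exists_seq_contDiffBump_tendsto_rOut {E : Type*} (c : E) :
    ∃ φ : ℕ → ContDiffBump c, Tendsto (fun n => (φ n).rOut) atTop (𝓝 0) := by
  have hlt : ∀ n : ℕ, 1 / ((n : ℝ) + 2) < 1 / ((n : ℝ) + 1) := fun n =>
    one_div_lt_one_div_of_lt (by positivity) (by linarith)
  exact ⟨fun n => ⟨1 / (n + 2), 1 / (n + 1), by positivity, hlt n⟩,
    tendsto_one_div_add_atTop_nhds_zero_nat⟩

section LineSlope

variable {E F : Type*} [NormedAddCommGroup E] [NormedSpace ℝ E] [NormedAddCommGroup F]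
  [NormedSpace ℝ F] {u : E → F}

/-- The difference quotient `h⁻¹ • (u (x + h • b) - u x)` of a `C¹` function in direction `b`,
written as an average of directional derivatives so that it extends continuously to `h = 0`. -/
def lineSlope (u : E → F) (b : E) (h : ℝ) (x : E) : F :=
  ∫ t in (0 : ℝ)..1, fderiv ℝ u (x + (t * h) • b) b

lemma lineSlope_zero [CompleteSpace F] (u : E → F) (b x : E) :
    lineSlope u b 0 x = fderiv ℝ u x b := by
  simp [lineSlope]

lemma smul_lineSlope [CompleteSpace F] (hu : ContDiff ℝ 1 u) (b : E) (h : ℝ) (x : E) :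
    h • lineSlope u b h x = u (x + h • b) - u x := by
  have hline : ∀ t : ℝ, HasDerivAt (fun t : ℝ => x + (t * h) • b) (h • b) t := fun t => by
    simpa using (((hasDerivAt_id t).mul_const h).smul_const b).const_add x
  have hderiv : ∀ t : ℝ, HasDerivAt (fun t : ℝ => u (x + (t * h) • b))
      (h • fderiv ℝ u (x + (t * h) • b) b) t := fun t => by
    simpa only [map_smul, Function.comp_def] using
      ((hu.differentiable one_ne_zero _).hasFDerivAt.comp_hasDerivAt t (hline t))
  have hcont : Continuous fun t : ℝ => h • fderiv ℝ u (x + (t * h) • b) b :=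
    (((hu.continuous_fderiv one_ne_zero).comp (by fun_prop)).clm_apply
      continuous_const).const_smul h
  rw [lineSlope, ← intervalIntegral.integral_smul,
    intervalIntegral.integral_eq_sub_of_hasDerivAt (fun t _ => hderiv t)
      (hcont.intervalIntegrable _ _)]
  simp only [one_mul, zero_mul, zero_smul, add_zero]

lemma continuous_lineSlope (hu : ContDiff ℝ 1 u) (b : E) :
    Continuous fun p : ℝ × E => lineSlope u b p.1 p.2 := by
  refine intervalIntegral.continuous_parametric_intervalIntegral_of_continuous' ?_ 0 1
  exact ((hu.continuous_fderiv one_ne_zero).comp (by fun_prop)).clm_apply continuous_const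

lemma lineSlope_eq_zero_of_notMem_cthickening {b x : E} {h : ℝ} (hh : |h| ≤ 1)
    (hx : x ∉ Metric.cthickening ‖b‖ (tsupport u)) : lineSlope u b h x = 0 := by
  refine intervalIntegral.integral_zero_ae (Eventually.of_forall fun t ht => ?_)
  rw [uIoc_of_le zero_le_one] at ht
  have hmem : x + (t * h) • b ∉ tsupport u := by
    refine fun hmem => hx (Metric.mem_cthickening_of_dist_le x _ _ _ hmem ?_)
    rw [dist_self_add_right, norm_smul, Real.norm_eq_abs, abs_mul, abs_of_pos ht.1]
    exact mul_le_of_le_one_left (norm_nonneg b) (mul_le_one₀ ht.2 (abs_nonneg h) hh)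
  rw [Function.notMem_support.1 fun hs => hmem (support_fderiv_subset ℝ hs), zero_apply]

end LineSlope

section DivergenceFree

variable {E : Type*} [NormedAddCommGroup E] [InnerProductSpace ℝ E] [FiniteDimensional ℝ E]
  [MeasurableSpace E] {μ : Measure E} {T : E → E}

/-- The vector field `T` satisfies `div T = 0` in the sense of distributions, with respect to the
reference measure `μ`. -/
def IsWeaklyDivergenceFree (T : E → E) (μ : Measure E) : Prop :=
  ∀ ψ : E → ℝ, ContDiff ℝ ∞ ψ → HasCompactSupport ψ → ∫ x, ⟪T x, ∇ ψ x⟫ ∂μ = 0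

variable [BorelSpace E]

lemma tendsto_integral_inner_comp_smul (hT : Integrable T μ) {Ψ : E → E} (hΨ : Continuous Ψ)
    (hΨs : HasCompactSupport Ψ) :
    Tendsto (fun c : ℝ => ∫ x, ⟪T x, Ψ (c • x)⟫ ∂μ) (𝓝 0) (𝓝 ⟪∫ x, T x ∂μ, Ψ 0⟫) := by
  obtain ⟨M, hM⟩ := hΨs.exists_bound_of_continuous hΨ
  rw [real_inner_comm, ← integral_inner hT]
  simp only [real_inner_comm]
  refine tendsto_integral_filter_of_dominated_convergence (fun x => ‖T x‖ * M) ?_ ?_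
    (hT.norm.mul_const M) ?_
  · exact Eventually.of_forall fun c => hT.aestronglyMeasurable.inner
      (hΨ.comp (continuous_const_smul c)).aestronglyMeasurable
  · exact Eventually.of_forall fun c => Eventually.of_forall fun x =>
      (norm_inner_le_norm _ _).trans (mul_le_mul_of_nonneg_left (hM _) (norm_nonneg _))
  · refine Eventually.of_forall fun x => tendsto_const_nhds.inner ?_
    have hcont : Continuous fun c : ℝ => Ψ (c • x) := by fun_prop
    simpa only [zero_smul] using hcont.tendsto 0

-- Test with `ψ (c • x) / c`, whose gradient tends to the constant field `∇ψ(0)` as `c → 0`.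
theorem IsWeaklyDivergenceFree.integral_eq_zero (hdiv : IsWeaklyDivergenceFree T μ)
    (hT : Integrable T μ) : ∫ x, T x ∂μ = 0 := by
  obtain ⟨ψ, hψ, hψs, hψ0⟩ := exists_contDiff_gradient_zero_eq (∫ x, T x ∂μ)
  have hlim := (tendsto_integral_inner_comp_smul hT
    (continuous_gradient (hψ.of_le (by simp))) (hasCompactSupport_gradient hψs)).mono_left
    (nhdsWithin_le_nhds (s := {0}ᶜ))
  have hzero : ∀ᶠ c : ℝ in 𝓝[≠] 0, ∫ x, ⟪T x, ∇ ψ (c • x)⟫ ∂μ = 0 := by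
    filter_upwards [self_mem_nhdsWithin] with c hc
    have h := hdiv _ (hψ.comp (contDiff_const_smul c)) (hψs.comp_smul hc)
    simp only [Function.comp_def, gradient_comp_smul, inner_smul_right] at h
    rw [integral_const_mul] at h
    exact (mul_eq_zero.1 h).resolve_left hc
  rw [hψ0] at hlim
  exact inner_self_eq_zero.1
    (tendsto_nhds_unique_of_eventuallyEq hlim tendsto_const_nhds hzero)

end DivergenceFree

section StressEnergy

variable {E : Type*} [NormedAddCommGroup E] [InnerProductSpace ℝ E] [CompleteSpace E] {u G : E → ℝ}

/-- The stress-energy tensor `∇u ⊗ ∇u - (‖∇u‖² / 2 - G) I` of `-Δu = g`, where `∇G = g ∇u`,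
contracted with the direction `b`. -/
def stressEnergy (u G : E → ℝ) (b x : E) : E :=
  ⟪∇ u x, b⟫ • ∇ u x - (‖∇ u x‖ ^ 2 / 2 - G x) • b

lemma continuous_stressEnergy (hu : ContDiff ℝ 1 u) (hG : Continuous G) (b : E) :
    Continuous (stressEnergy u G b) := by
  have hcu := continuous_gradient hu
  unfold stressEnergy
  fun_prop

lemma norm_stressEnergy_le (u G : E → ℝ) (b x : E) :
    ‖stressEnergy u G b x‖ ≤ (2 * ‖∇ u x‖ ^ 2 + ‖G x‖) * ‖b‖ := by
  have hscalar : ‖‖∇ u x‖ ^ 2 / 2 - G x‖ ≤ ‖∇ u x‖ ^ 2 + ‖G x‖ := by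
    refine (norm_sub_le _ _).trans (add_le_add_left ?_ _)
    rw [norm_of_nonneg (by positivity)]
    exact half_le_self (by positivity)
  calc ‖stressEnergy u G b x‖
      ≤ ‖⟪∇ u x, b⟫‖ * ‖∇ u x‖ + ‖‖∇ u x‖ ^ 2 / 2 - G x‖ * ‖b‖ := by
        rw [← norm_smul, ← norm_smul]
        exact norm_sub_le _ _
    _ ≤ ‖∇ u x‖ * ‖b‖ * ‖∇ u x‖ + (‖∇ u x‖ ^ 2 + ‖G x‖) * ‖b‖ := by
        gcongr
        exact norm_inner_le_norm _ _
    _ = (2 * ‖∇ u x‖ ^ 2 + ‖G x‖) * ‖b‖ := by ring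

lemma sum_inner_stressEnergy {ι : Type*} [Fintype ι] (e : OrthonormalBasis ι ℝ E)
    (u G : E → ℝ) (x : E) :
    ∑ i, ⟪stressEnergy u G (e i) x, e i⟫ =
      ‖∇ u x‖ ^ 2 - Module.finrank ℝ E * (‖∇ u x‖ ^ 2 / 2 - G x) := by
  have hterm : ∀ i, ⟪stressEnergy u G (e i) x, e i⟫ =
      ‖⟪∇ u x, e i⟫‖ ^ 2 - (‖∇ u x‖ ^ 2 / 2 - G x) := fun i => by
    rw [stressEnergy, inner_sub_left, real_inner_smul_left, real_inner_smul_left,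
      real_inner_self_eq_norm_sq, e.norm_eq_one, Real.norm_eq_abs, sq_abs]
    ring
  simp only [hterm]
  rw [Finset.sum_sub_distrib, e.sum_sq_norm_inner_left, Finset.sum_const, Finset.card_univ,
    ← Module.finrank_eq_card_basis e.toBasis, nsmul_eq_mul]

lemma integrable_stressEnergy [SecondCountableTopology E] [MeasurableSpace E] [BorelSpace E]
    {μ : Measure E} (hu : ContDiff ℝ 1 u) (hgrad : MemLp (fun x => ‖∇ u x‖) 2 μ)
    (hG : Integrable G μ) (b : E) : Integrable (stressEnergy u G b) μ := by
  have hcu := (continuous_gradient hu).aestronglyMeasurable (μ := μ)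
  refine (((hgrad.integrable_sq.const_mul 2).add hG.norm).mul_const ‖b‖).mono' ?_
    (Eventually.of_forall (norm_stressEnergy_le u G b))
  exact ((hcu.inner aestronglyMeasurable_const).smul hcu).sub
    (((hgrad.integrable_sq.div_const 2).sub hG).aestronglyMeasurable.smul
      aestronglyMeasurable_const)

end StressEnergy

section PoissonEquation

variable {E : Type*} [NormedAddCommGroup E] [InnerProductSpace ℝ E] [FiniteDimensional ℝ E]
  [MeasurableSpace E] [BorelSpace E] {μ : Measure E} {u g G : E → ℝ}

/-- The function `u` solves Poisson's equation `-Δu = g` in the sense of distributions. Here `∇ u`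
is the classical gradient, so the notion is meaningful only for differentiable `u`. -/
def IsWeakPoissonSolution (u g : E → ℝ) (μ : Measure E) : Prop :=
  ∀ φ : E → ℝ, ContDiff ℝ ∞ φ → HasCompactSupport φ →
    ∫ x, ⟪∇ u x, ∇ φ x⟫ ∂μ = ∫ x, g x * φ x ∂μ

lemma integrable_inner_gradient_sub_mul [IsFiniteMeasureOnCompacts μ] (hu : ContDiff ℝ 1 u)
    (hg : Continuous g) {φ : E → ℝ} (hφ : ContDiff ℝ 1 φ) (hφs : HasCompactSupport φ) :
    Integrable (fun x => ⟪∇ u x, ∇ φ x⟫ - g x * φ x) μ :=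
  (integrable_inner_of_hasCompactSupport (continuous_gradient hu) (continuous_gradient hφ)
    (hasCompactSupport_gradient hφs)).sub
    ((hg.mul hφ.continuous).integrable_of_hasCompactSupport hφs.mul_left)

lemma continuousOn_integral_lineSlope [IsFiniteMeasureOnCompacts μ] (hu : ContDiff ℝ 1 u)
    (hg : Continuous g) {ψ : E → ℝ} (hψ : ContDiff ℝ 1 ψ) (hψs : HasCompactSupport ψ)
    (b : E) :
    ContinuousOn (fun h : ℝ => ∫ x, ((⟪∇ u x, ∇ ψ x⟫ - g x * ψ x) *
      (lineSlope u b h x + lineSlope u b (-h) x) -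
      lineSlope ψ b h x * ⟪∇ u x, ∇ u (x + h • b)⟫) ∂μ) (Icc (-1) 1) := by
  have hcu := continuous_gradient hu
  have hcψ := continuous_gradient hψ
  have hcψ₀ := hψ.continuous
  have hsu := continuous_lineSlope hu b
  have hsψ := continuous_lineSlope hψ b
  have hsu' : Continuous fun p : ℝ × E => lineSlope u b (-p.1) p.2 :=
    hsu.comp (continuous_fst.neg.prodMk continuous_snd)
  have hK : IsCompact (Metric.cthickening ‖b‖ (tsupport ψ)) := hψs.isCompact.cthickening
  refine continuousOn_integral_of_compact_support hK (Continuous.continuousOn ?_)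
    fun h x hh hx => ?_
  · simp only [Function.uncurry_def]
    fun_prop
  · have hxψ : x ∉ tsupport ψ := fun hmem => hx (Metric.self_subset_cthickening _ hmem)
    rw [lineSlope_eq_zero_of_notMem_cthickening (abs_le.2 hh) hx,
      Function.notMem_support.1 fun hs => hxψ (support_gradient_subset ψ hs),
      image_eq_zero_of_notMem_tsupport hxψ]
    simp only [inner_zero_right, mul_zero, zero_mul, sub_zero]

variable [μ.IsAddHaarMeasure]

lemma IsWeakPoissonSolution.integral_inner_gradient_eq (hug : IsWeakPoissonSolution u g μ)
    (hu : ContDiff ℝ 1 u) (hg : Continuous g) {φ : E → ℝ} (hφ : ContDiff ℝ 1 φ)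
    (hφs : HasCompactSupport φ) :
    ∫ x, ⟪∇ u x, ∇ φ x⟫ ∂μ = ∫ x, g x * φ x ∂μ := by
  obtain ⟨ρ, hρ⟩ := exists_seq_contDiffBump_tendsto_rOut (0 : E)
  have hρint : ∀ n, LocallyIntegrable ((ρ n).normed μ) μ := fun n =>
    (ρ n).continuous_normed.locallyIntegrable
  have hweak : ∀ n,
      ∫ x, ⟪∇ u x, ((ρ n).normed μ ⋆[ContinuousLinearMap.lsmul ℝ ℝ, μ] ∇ φ) x⟫ ∂μ =
        ∫ x, ⟪g x, ((ρ n).normed μ ⋆[ContinuousLinearMap.lsmul ℝ ℝ, μ] φ) x⟫ ∂μ := fun n => by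
    have h := hug ((ρ n).normed μ ⋆[ContinuousLinearMap.lsmul ℝ ℝ, μ] φ)
      ((ρ n).hasCompactSupport_normed.contDiff_convolution_left _ (ρ n).contDiff_normed
        hφ.continuous.locallyIntegrable)
      ((ρ n).hasCompactSupport_normed.convolution _ hφs)
    simpa only [gradient_convolution (hρint n) hφ hφs, RCLike.inner_apply, conj_trivial,
      mul_comm] using h
  have hlhs := tendsto_integral_inner_normed_convolution (μ := μ) hρ (continuous_gradient hu)
    (continuous_gradient hφ) (hasCompactSupport_gradient hφs)
  have hrhs := tendsto_integral_inner_normed_convolution (μ := μ) hρ hg hφ.continuous hφs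
  simp only [hweak] at hlhs
  simpa only [RCLike.inner_apply, conj_trivial, mul_comm] using tendsto_nhds_unique hlhs hrhs

lemma IsWeakPoissonSolution.integral_inner_gradient_sub_mul_eq_zero
    (hug : IsWeakPoissonSolution u g μ) (hu : ContDiff ℝ 1 u) (hg : Continuous g) {φ : E → ℝ}
    (hφ : ContDiff ℝ 1 φ) (hφs : HasCompactSupport φ) :
    ∫ x, (⟪∇ u x, ∇ φ x⟫ - g x * φ x) ∂μ = 0 := by
  rw [integral_sub, hug.integral_inner_gradient_eq hu hg hφ hφs, sub_self]
  · exact integrable_inner_of_hasCompactSupport (continuous_gradient hu) (continuous_gradient hφ)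
      (hasCompactSupport_gradient hφs)
  · exact (hg.mul hφ.continuous).integrable_of_hasCompactSupport hφs.mul_left

-- The test function is `ψ(x) (u(x + v) - u(x - v))`: translation invariance of the measure moves
-- the symmetric difference of `∇u` onto `ψ`, so that no second derivative of `u` appears.
lemma IsWeakPoissonSolution.integral_symmetric_difference_eq_zero
    (hug : IsWeakPoissonSolution u g μ) (hu : ContDiff ℝ 1 u) (hg : Continuous g) {ψ : E → ℝ}
    (hψ : ContDiff ℝ 1 ψ) (hψs : HasCompactSupport ψ) (v : E) :
    ∫ x, ((⟪∇ u x, ∇ ψ x⟫ - g x * ψ x) * (u (x + v) - u (x + -v)) -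
      (ψ (x + v) - ψ x) * ⟪∇ u x, ∇ u (x + v)⟫) ∂μ = 0 := by
  have hcu := continuous_gradient hu
  let φ : E → ℝ := fun x => ψ x * (u (x + v) - u (x + -v))
  have hφ : ContDiff ℝ 1 φ := hψ.mul
    ((hu.comp (contDiff_id.add contDiff_const)).sub (hu.comp (contDiff_id.add contDiff_const)))
  have hφs : HasCompactSupport φ := hψs.mul_right
  let q : E → ℝ := fun x => ψ (x + v) * ⟪∇ u x, ∇ u (x + v)⟫
  have hq : Integrable q μ := by
    refine Continuous.integrable_of_hasCompactSupport
      ((hψ.continuous.comp (by fun_prop)).mul (hcu.inner (hcu.comp (by fun_prop)))) ?_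
    exact (hψs.comp_homeomorph (Homeomorph.addRight v)).mul_right
  have hqshift : Integrable (fun x => q (x + -v)) μ := hq.comp_add_right (-v)
  have hqdiff : Integrable (fun x => q (x + -v) - q x) μ := hqshift.sub hq
  have hsplit : ∀ x, (⟪∇ u x, ∇ ψ x⟫ - g x * ψ x) * (u (x + v) - u (x + -v)) -
      (ψ (x + v) - ψ x) * ⟪∇ u x, ∇ u (x + v)⟫ =
      (⟪∇ u x, ∇ φ x⟫ - g x * φ x) + (q (x + -v) - q x) := fun x => by
    rw [gradient_mul_symmetric_difference (hu.differentiable one_ne_zero)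
      (hψ.differentiable one_ne_zero)]
    simp only [φ, q, inner_add_right, inner_sub_right, inner_smul_right, neg_add_cancel_right,
      real_inner_comm (∇ u x) (∇ u (x + -v))]
    ring
  simp only [hsplit]
  rw [integral_add (integrable_inner_gradient_sub_mul hu hg hφ hφs) hqdiff,
    hug.integral_inner_gradient_sub_mul_eq_zero hu hg hφ hφs, integral_sub hqshift hq,
    integral_add_right_eq_self q, sub_self, add_zero]

lemma IsWeakPoissonSolution.integral_lineSlope_eq_zero (hug : IsWeakPoissonSolution u g μ)
    (hu : ContDiff ℝ 1 u) (hg : Continuous g) {ψ : E → ℝ} (hψ : ContDiff ℝ 1 ψ)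
    (hψs : HasCompactSupport ψ) (b : E) {h : ℝ} (hh : h ≠ 0) :
    ∫ x, ((⟪∇ u x, ∇ ψ x⟫ - g x * ψ x) * (lineSlope u b h x + lineSlope u b (-h) x) -
      lineSlope ψ b h x * ⟪∇ u x, ∇ u (x + h • b)⟫) ∂μ = 0 := by
  have hdiff := hug.integral_symmetric_difference_eq_zero hu hg hψ hψs (h • b)
  have hsmul : ∀ x, (⟪∇ u x, ∇ ψ x⟫ - g x * ψ x) * (u (x + h • b) - u (x + -(h • b))) -
      (ψ (x + h • b) - ψ x) * ⟪∇ u x, ∇ u (x + h • b)⟫ =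
      h * ((⟪∇ u x, ∇ ψ x⟫ - g x * ψ x) * (lineSlope u b h x + lineSlope u b (-h) x) -
        lineSlope ψ b h x * ⟪∇ u x, ∇ u (x + h • b)⟫) := fun x => by
    have hu₁ := smul_lineSlope hu b h x
    have hu₂ := smul_lineSlope hu b (-h) x
    have hψ₁ := smul_lineSlope hψ b h x
    simp only [smul_eq_mul, neg_smul] at hu₁ hu₂ hψ₁
    linear_combination -(⟪∇ u x, ∇ ψ x⟫ - g x * ψ x) * (hu₁ - hu₂) +
      ⟪∇ u x, ∇ u (x + h • b)⟫ * hψ₁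
  simp only [hsmul] at hdiff
  rw [integral_const_mul] at hdiff
  exact (mul_eq_zero.1 hdiff).resolve_left hh

lemma IsWeakPoissonSolution.integral_gradient_multiplier_eq_zero (hug : IsWeakPoissonSolution u g μ)
    (hu : ContDiff ℝ 1 u) (hg : Continuous g) {ψ : E → ℝ} (hψ : ContDiff ℝ 1 ψ)
    (hψs : HasCompactSupport ψ) (b : E) :
    ∫ x, ((⟪∇ u x, ∇ ψ x⟫ - g x * ψ x) * (2 * ⟪∇ u x, b⟫) - ⟪∇ ψ x, b⟫ * ‖∇ u x‖ ^ 2) ∂μ = 0 := by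
  have hcont := (continuousOn_integral_lineSlope (μ := μ) hu hg hψ hψs b).continuousAt
    (Icc_mem_nhds (neg_lt_zero.2 one_pos) one_pos)
  have hlim := tendsto_nhds_unique_of_eventuallyEq
    (hcont.tendsto.mono_left (nhdsWithin_le_nhds (s := {0}ᶜ))) tendsto_const_nhds
    (eventually_mem_nhdsWithin.mono fun h hh =>
      hug.integral_lineSlope_eq_zero hu hg hψ hψs b hh)
  simpa only [neg_zero, lineSlope_zero, zero_smul, add_zero, real_inner_self_eq_norm_sq,
    ← inner_gradient_left, ← two_mul] using hlim

lemma IsWeakPoissonSolution.isWeaklyDivergenceFree_stressEnergy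
    (hug : IsWeakPoissonSolution u g μ) (hu : ContDiff ℝ 1 u) (hg : Continuous g)
    (hG : ∀ x, HasGradientAt G (g x • ∇ u x) x) (b : E) :
    IsWeaklyDivergenceFree (stressEnergy u G b) μ := by
  intro ψ hψ hψs
  have hψ₁ : ContDiff ℝ 1 ψ := hψ.of_le (by simp)
  have hcu := continuous_gradient hu
  have hG₁ : ContDiff ℝ 1 G := contDiff_one_of_hasGradientAt hG (hg.smul hcu)
  have hψG : ContDiff ℝ 1 fun y => ψ y * G y := hψ₁.mul hG₁
  have hψGs : HasCompactSupport fun y => ψ y * G y := hψs.mul_right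
  have hstress : Integrable (fun x => ⟪stressEnergy u G b x, ∇ ψ x⟫) μ :=
    integrable_inner_of_hasCompactSupport (continuous_stressEnergy hu hG₁.continuous b)
      (continuous_gradient hψ₁) (hasCompactSupport_gradient hψs)
  have hsplit : ∀ x, (⟪∇ u x, ∇ ψ x⟫ - g x * ψ x) * (2 * ⟪∇ u x, b⟫) - ⟪∇ ψ x, b⟫ * ‖∇ u x‖ ^ 2 =
      2 * (⟪stressEnergy u G b x, ∇ ψ x⟫ - ⟪∇ (fun y => ψ y * G y) x, b⟫) := fun x => by
    rw [gradient_mul (hψ₁.differentiable one_ne_zero x) (hG x).differentiableAt, (hG x).gradient,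
      stressEnergy]
    simp only [inner_add_left, inner_sub_left, real_inner_smul_left]
    rw [real_inner_comm b (∇ ψ x)]
    ring
  have hvar := hug.integral_gradient_multiplier_eq_zero hu hg hψ₁ hψs b
  simp only [hsplit] at hvar
  rw [integral_const_mul, integral_sub hstress (integrable_inner_gradient hψG hψGs b),
    integral_inner_gradient_eq_zero hψG hψGs b, sub_zero] at hvar
  exact (mul_eq_zero.1 hvar).resolve_left two_ne_zero

theorem IsWeakPoissonSolution.pohozaev (hug : IsWeakPoissonSolution u g μ) (hu : ContDiff ℝ 1 u)
    (hg : Continuous g) (hgrad : MemLp (fun x => ‖∇ u x‖) 2 μ)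
    (hG : ∀ x, HasGradientAt G (g x • ∇ u x) x) (hGint : Integrable G μ) :
    ((Module.finrank ℝ E : ℝ) - 2) / 2 * ∫ x, ‖∇ u x‖ ^ 2 ∂μ =
      Module.finrank ℝ E * ∫ x, G x ∂μ := by
  let e := stdOrthonormalBasis ℝ E
  have hT : ∀ i, Integrable (stressEnergy u G (e i)) μ := fun i =>
    integrable_stressEnergy hu hgrad hGint (e i)
  have hsq : Integrable (fun x => ‖∇ u x‖ ^ 2) μ := hgrad.integrable_sq
  have htrace : ∫ x, ∑ i, ⟪stressEnergy u G (e i) x, e i⟫ ∂μ = 0 := by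
    rw [integral_finsetSum _ fun i _ => (hT i).inner_const (e i)]
    refine Finset.sum_eq_zero fun i _ => ?_
    simp only [real_inner_comm (e i)]
    rw [integral_inner (hT i), (hug.isWeaklyDivergenceFree_stressEnergy hu hg hG
      (e i)).integral_eq_zero (hT i), inner_zero_right]
  simp only [sum_inner_stressEnergy] at htrace
  have hdiff : Integrable (fun x => ‖∇ u x‖ ^ 2 / 2 - G x) μ := (hsq.div_const 2).sub hGint
  rw [integral_sub hsq (hdiff.const_mul _), integral_const_mul,
    integral_sub (hsq.div_const 2) hGint, integral_div] at htrace
  linear_combination -htrace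

end PoissonEquation

theorem pohozaev_identity_general {E : Type*} [NormedAddCommGroup E] [InnerProductSpace ℝ E]
    [FiniteDimensional ℝ E] [MeasurableSpace E] [BorelSpace E] {μ : Measure E}
    [μ.IsAddHaarMeasure] (m : ℝ) {f : ℝ → ℝ} (hf : Continuous f) {u : E → ℝ}
    (hu : ContDiff ℝ 1 u) (hu_L2 : MemLp u 2 μ) (hgrad_L2 : MemLp (fun x => ‖∇ u x‖) 2 μ)
    (hFu_L1 : Integrable (fun x => primF f (u x)) μ)
    (hu_weak : ∀ φ : E → ℝ, ContDiff ℝ ∞ φ → HasCompactSupport φ →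
      (∫ x, ⟪∇ u x, ∇ φ x⟫ ∂μ) + m * (∫ x, u x * φ x ∂μ) = ∫ x, f (u x) * φ x ∂μ) :
    ((Module.finrank ℝ E : ℝ) - 2) / 2 * (∫ x, ‖∇ u x‖ ^ 2 ∂μ)
      + (Module.finrank ℝ E : ℝ) * m / 2 * (∫ x, u x ^ 2 ∂μ)
      - (Module.finrank ℝ E : ℝ) * (∫ x, primF f (u x) ∂μ) = 0 := by
  have hug : IsWeakPoissonSolution u (fun x => f (u x) - m * u x) μ := fun φ hφ hφs => by
    have hfφ : Integrable (fun x => f (u x) * φ x) μ :=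
      ((hf.comp hu.continuous).mul hφ.continuous).integrable_of_hasCompactSupport hφs.mul_left
    have huφ : Integrable (fun x => u x * φ x) μ :=
      (hu.continuous.mul hφ.continuous).integrable_of_hasCompactSupport hφs.mul_left
    simp only [sub_mul, mul_assoc]
    rw [integral_sub hfφ (huφ.const_mul m), integral_const_mul, ← hu_weak φ hφ hφs,
      add_sub_cancel_right]
  have hpot : ∀ s, HasDerivAt (fun s => primF f s - m / 2 * s ^ 2) (f s - m * s) s := fun s => by
    refine ((hf.integral_hasStrictDerivAt 0 s).hasDerivAt.fun_sub
      ((hasDerivAt_pow 2 s).const_mul (m / 2))).congr_deriv ?_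
    ring
  have hG := fun x => hasGradientAt_comp (hpot (u x)) (hu.differentiable one_ne_zero x)
  have hmass : Integrable (fun x => m / 2 * u x ^ 2) μ := hu_L2.integrable_sq.const_mul _
  have hpoisson := hug.pohozaev hu ((hf.comp hu.continuous).sub (continuous_const.mul
    hu.continuous)) hgrad_L2 hG (hFu_L1.sub hmass)
  rw [integral_sub hFu_L1 hmass, integral_const_mul] at hpoisson
  linear_combination hpoisson

/-- **Lemma 2.1(i): Pohozaev identity.**
Every weak solution `u` of `−Δu + m u = f(u)` on `ℝ^N`, `N ≥ 3`, with `u, |∇u| ∈ L²` and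
`F(u) ∈ L¹`, under continuity, vanishing at `0`, and subcritical growth of `f`, satisfies
`((N−2)/2)∫|∇u|² + (Nm/2)∫u² − N∫F(u) = 0`. -/
theorem pohozaev_identity (N : ℕ) (hN : 3 ≤ N) (m : ℝ) (hm : 0 < m)
    (f : ℝ → ℝ) (hf_cont : Continuous f) (hf0 : f 0 = 0)
    (hf_zero : Tendsto (fun s => f s / s) (nhdsWithin 0 {(0:ℝ)}ᶜ) (nhds 0))
    (C : ℝ) (hC : 0 < C)
    (hf_growth : ∀ s : ℝ, |f s| ≤ C * (|s| + |s| ^ (((N : ℝ) + 2) / ((N : ℝ) - 2))))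
    (u : EuclideanSpace ℝ (Fin N) → ℝ)
    (hu_C1 : ContDiff ℝ 1 u)
    (hu_L2 : MemLp u 2 volume)
    (hgrad_L2 : MemLp (fun x => ‖gradient u x‖) 2 volume)
    (hFu_L1 : Integrable (fun x => primF f (u x)) volume)
    (hu_weak : ∀ φ : EuclideanSpace ℝ (Fin N) → ℝ, ContDiff ℝ (⊤ : ℕ∞) φ → HasCompactSupport φ →
      (∫ x, ⟪gradient u x, gradient φ x⟫) + m * (∫ x, u x * φ x) = ∫ x, f (u x) * φ x) :
    ((N : ℝ) - 2) / 2 * (∫ x, ‖gradient u x‖ ^ 2)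
      + (N : ℝ) * m / 2 * (∫ x, u x ^ 2)
      - (N : ℝ) * (∫ x, primF f (u x)) = 0 := by
  simpa only [finrank_euclideanSpace_fin] using
    pohozaev_identity_general m hf_cont hu_C1 hu_L2 hgrad_L2 hFu_L1 hu_weak
end
end

section
/- Let N ≥ 3, p ∈ (2, 2N/(N−2)), and C₁, D > 0. There exists ρ₂ > 0, depending only on N, p, C₁, and D, with the following property: for every continuous f : ℝ → ℝ satisfying |f(s)s| ≤ (1/4)s² + C₁|s|^p for all s ∈ ℝ, and every continuously differentiable w : ℝ^N → ℝ with w, |∇w| ∈ L²(ℝ^N) satisfying ∫(|∇w|² + w²) ≤ D² and ∫(|∇w|² + w²) ≤ ∫|f(w)w|, either w = 0 almost everywhere or (∫ w²)^{1/2} ≥ ρ₂. -/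
open MeasureTheory Filter Set Real

noncomputable section

/-
The mass `m = ‖w‖₂` and the energy norm `e = (‖∇w‖₂² + ‖w‖₂²)^{1/2}` satisfy `m ≤ e ≤ D`.
Interpolating `L^p` between `L²` and the critical Sobolev space gives
`∫ |w|^p ≤ K m^(p - σ) e^σ` with `σ = n(p - 2)/2`, so the hypothesis on the energy becomes
`e² ≤ θ m² + C m^(p - σ) e^σ` with `θ < 1`. The power of `m` is positive because `p` is
subcritical, and the total degree `p` exceeds `2`: trading the surplus of `e` for powers of `D`
leaves `1 - θ ≤ C' m^c` for some `c > 0`, unless `e = 0`.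
-/

open Module
open scoped NNReal ENNReal Topology

section Cutoff

variable {E F : Type*} [NormedAddCommGroup E] [NormedSpace ℝ E]
  [NormedAddCommGroup F] [NormedSpace ℝ F]

variable (E) in
lemma exists_contDiff_cutoff [FiniteDimensional ℝ E] :
    ∃ K : ℝ≥0, ∀ r : ℝ≥0, 0 < r → ∃ χ : E → ℝ, ContDiff ℝ 1 χ ∧ HasCompactSupport χ ∧
      (∀ x, ‖χ x‖ ≤ 1) ∧ (∀ x, ‖fderiv ℝ χ x‖ ≤ (K / r : ℝ≥0)) ∧ ∀ x, ‖x‖ ≤ r → χ x = 1 := by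
  let φ : ContDiffBump (0 : E) := ⟨1, 2, one_pos, one_lt_two⟩
  have hφ : ContDiff ℝ 1 φ := φ.contDiff
  obtain ⟨K, hK⟩ := (φ.hasCompactSupport.fderiv ℝ).exists_bound_of_continuous
    (hφ.continuous_fderiv one_ne_zero)
  refine ⟨K.toNNReal, fun r hr ↦ ⟨fun x ↦ φ ((r : ℝ)⁻¹ • x), hφ.comp (contDiff_const_smul _),
    φ.hasCompactSupport.comp_smul (by positivity), fun x ↦ ?_, fun x ↦ ?_, fun x hx ↦ ?_⟩⟩
  · rw [Real.norm_of_nonneg φ.nonneg]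
    exact φ.le_one
  · rw [fderiv_comp_smul, norm_smul, norm_inv, NNReal.norm_eq, NNReal.coe_div, div_eq_inv_mul]
    gcongr
    exact (hK _).trans (Real.le_coe_toNNReal K)
  · apply φ.one_of_mem_closedBall
    rwa [mem_closedBall_zero_iff, norm_smul, norm_inv, NNReal.norm_eq,
      inv_mul_le_one₀ (by positivity)]

lemma eLpNorm_fderiv_smul_le [MeasurableSpace E] [BorelSpace E] {μ : Measure E} {p : ℝ≥0∞}
    (hp : 1 ≤ p) {χ : E → ℝ} {u : E → F} (hχ : ContDiff ℝ 1 χ) (hu : ContDiff ℝ 1 u) {ε : ℝ≥0}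
    (hχ_le : ∀ x, ‖χ x‖ ≤ 1) (hχ_deriv : ∀ x, ‖fderiv ℝ χ x‖ ≤ ε) :
    eLpNorm (fderiv ℝ (fun x ↦ χ x • u x)) p μ
      ≤ eLpNorm (fderiv ℝ u) p μ + ε * eLpNorm u p μ := by
  have leibniz (x : E) :
      ‖fderiv ℝ (fun x ↦ χ x • u x) x‖ ≤ ‖fderiv ℝ u x‖ + (ε : ℝ) * ‖u x‖ := by
    rw [fderiv_fun_smul (hχ.differentiable one_ne_zero x) (hu.differentiable one_ne_zero x)]
    refine (norm_add_le _ _).trans (add_le_add ?_ ?_)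
    · rw [norm_smul]
      exact mul_le_of_le_one_left (norm_nonneg _) (hχ_le x)
    · rw [ContinuousLinearMap.norm_smulRight_apply]
      gcongr
      exact hχ_deriv x
  calc eLpNorm (fderiv ℝ (fun x ↦ χ x • u x)) p μ
      ≤ eLpNorm ((fun x ↦ ‖fderiv ℝ u x‖) + (ε : ℝ) • fun x ↦ ‖u x‖) p μ :=
        eLpNorm_mono_real leibniz
    _ ≤ eLpNorm (fun x ↦ ‖fderiv ℝ u x‖) p μ + eLpNorm ((ε : ℝ) • fun x ↦ ‖u x‖) p μ :=
        eLpNorm_add_le (hu.continuous_fderiv one_ne_zero).norm.aestronglyMeasurable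
          (hu.continuous.norm.const_smul _).aestronglyMeasurable hp
    _ = eLpNorm (fderiv ℝ u) p μ + ε * eLpNorm u p μ := by
        rw [eLpNorm_const_smul, eLpNorm_norm, eLpNorm_norm, NNReal.enorm_eq]

end Cutoff

section Sobolev

variable {E F : Type*} [NormedAddCommGroup E] [NormedSpace ℝ E] [FiniteDimensional ℝ E]
  [MeasurableSpace E] [BorelSpace E] {μ : Measure E} [μ.IsAddHaarMeasure]
  [NormedAddCommGroup F] [InnerProductSpace ℝ F] {u : E → F} {p q : ℝ≥0}

-- Truncating at radius `n` costs `O(1/n) ‖u‖_p` in the gradient norm; Fatou removes the cutoff.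
theorem eLpNorm_le_eLpNorm_fderiv_of_memLp (hu : ContDiff ℝ 1 u) (hup : MemLp u p μ)
    (hp : 1 ≤ p) (hn : 0 < finrank ℝ E) (hq : (q : ℝ)⁻¹ = (p : ℝ)⁻¹ - (finrank ℝ E : ℝ)⁻¹) :
    eLpNorm u q μ ≤ eLpNormLESNormFDerivOfEqInnerConst μ p * eLpNorm (fderiv ℝ u) p μ := by
  obtain ⟨K, hK⟩ := exists_contDiff_cutoff E
  choose χ hχ hχ_supp hχ_le hχ_deriv hχ_one using fun n : ℕ ↦ hK (n + 1) (by positivity)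
  set C := eLpNormLESNormFDerivOfEqInnerConst μ p
  have sobolev_cutoff (n : ℕ) : eLpNorm (fun x ↦ χ n x • u x) q μ
      ≤ C * (eLpNorm (fderiv ℝ u) p μ + (K / (n + 1) : ℝ≥0) * eLpNorm u p μ) :=
    (eLpNorm_le_eLpNorm_fderiv_of_eq_inner μ ((hχ n).smul hu) (hχ_supp n).smul_right hp hn
      hq).trans <| by
        gcongr
        exact eLpNorm_fderiv_smul_le (by exact_mod_cast hp) (hχ n) hu (hχ_le n) (hχ_deriv n)
  have cutoff_tendsto (x : E) : Tendsto (fun n ↦ χ n x • u x) atTop (𝓝 (u x)) := by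
    refine tendsto_const_nhds.congr' ?_
    filter_upwards [eventually_ge_atTop ⌈‖x‖⌉₊] with n hn
    have hxn : ‖x‖ ≤ n := (Nat.le_ceil _).trans (by exact_mod_cast hn)
    rw [hχ_one n x (by push_cast; linarith), one_smul]
  have error_tendsto : Tendsto (fun n : ℕ ↦ (K / (n + 1) : ℝ≥0)) atTop (𝓝 0) := by
    simpa only [mul_one_div, mul_zero] using
      (tendsto_one_div_add_atTop_nhds_zero_nat (𝕜 := ℝ≥0)).const_mul K
  have bound_tendsto : Tendsto
      (fun n : ℕ ↦ C * (eLpNorm (fderiv ℝ u) p μ + (K / (n + 1) : ℝ≥0) * eLpNorm u p μ))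
      atTop (𝓝 (C * eLpNorm (fderiv ℝ u) p μ)) := by
    have := ENNReal.Tendsto.mul_const (ENNReal.tendsto_coe.2 error_tendsto)
      (Or.inr hup.eLpNorm_ne_top)
    simpa using ENNReal.Tendsto.const_mul (this.const_add (eLpNorm (fderiv ℝ u) p μ))
      (Or.inr ENNReal.coe_ne_top)
  calc eLpNorm u q μ ≤ liminf (fun n ↦ eLpNorm (fun x ↦ χ n x • u x) q μ) atTop :=
        Lp.eLpNorm_lim_le_liminf_eLpNorm
          (fun n ↦ ((hχ n).smul hu).continuous.aestronglyMeasurable) u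
          (Eventually.of_forall cutoff_tendsto)
    _ ≤ _ := liminf_le_liminf (Eventually.of_forall sobolev_cutoff)
    _ = C * eLpNorm (fderiv ℝ u) p μ := bound_tendsto.liminf_eq

lemma memLp_of_memLp_fderiv (hu : ContDiff ℝ 1 u) (hup : MemLp u p μ)
    (hdu : MemLp (fderiv ℝ u) p μ) (hp : 1 ≤ p) (hn : 0 < finrank ℝ E)
    (hq : (q : ℝ)⁻¹ = (p : ℝ)⁻¹ - (finrank ℝ E : ℝ)⁻¹) : MemLp u q μ :=
  ⟨hu.continuous.aestronglyMeasurable, (eLpNorm_le_eLpNorm_fderiv_of_memLp hu hup hp hn hq).trans_lt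
    (ENNReal.mul_lt_top ENNReal.coe_lt_top hdu.eLpNorm_lt_top)⟩

lemma lpNorm_le_lpNorm_fderiv_of_memLp (hu : ContDiff ℝ 1 u) (hup : MemLp u p μ)
    (hdu : MemLp (fderiv ℝ u) p μ) (hp : 1 ≤ p) (hn : 0 < finrank ℝ E)
    (hq : (q : ℝ)⁻¹ = (p : ℝ)⁻¹ - (finrank ℝ E : ℝ)⁻¹) :
    lpNorm u q μ ≤ eLpNormLESNormFDerivOfEqInnerConst μ p * lpNorm (fderiv ℝ u) p μ := by
  rw [← toReal_eLpNorm hup.aestronglyMeasurable, ← toReal_eLpNorm hdu.aestronglyMeasurable,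
    ← ENNReal.coe_toReal, ← ENNReal.toReal_mul]
  exact ENNReal.toReal_mono (ENNReal.mul_ne_top ENNReal.coe_ne_top hdu.eLpNorm_ne_top)
    (eLpNorm_le_eLpNorm_fderiv_of_memLp hu hup hp hn hq)

end Sobolev

section Interpolation

variable {α : Type*} [MeasurableSpace α] {μ : Measure α} {a b : ℝ}

lemma integrable_rpow_mul_rpow {f g : α → ℝ} (hf : Integrable f μ) (hg : Integrable g μ)
    (hf_nonneg : ∀ x, 0 ≤ f x) (hg_nonneg : ∀ x, 0 ≤ g x) (ha : 0 ≤ a) (hb : 0 ≤ b)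
    (hab : a + b = 1) : Integrable (fun x ↦ f x ^ a * g x ^ b) μ := by
  refine ((hf.const_mul a).add (hg.const_mul b)).mono'
    ((hf.aemeasurable.pow_const a).mul (hg.aemeasurable.pow_const b)).aestronglyMeasurable
    (Eventually.of_forall fun x ↦ ?_)
  have := hf_nonneg x
  have := hg_nonneg x
  rw [Real.norm_of_nonneg (by positivity)]
  exact Real.geom_mean_le_arith_mean2_weighted ha hb (hf_nonneg x) (hg_nonneg x) hab

lemma integral_rpow_mul_rpow_le {f g : α → ℝ} (hf : Integrable f μ) (hg : Integrable g μ)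
    (hf_nonneg : ∀ x, 0 ≤ f x) (hg_nonneg : ∀ x, 0 ≤ g x) (ha : 0 ≤ a) (hb : 0 ≤ b)
    (hab : a + b = 1) :
    ∫ x, f x ^ a * g x ^ b ∂μ ≤ (∫ x, f x ∂μ) ^ a * (∫ x, g x ∂μ) ^ b := by
  have hIf : 0 ≤ ∫ x, f x ∂μ := integral_nonneg hf_nonneg
  have hIg : 0 ≤ ∫ x, g x ∂μ := integral_nonneg hg_nonneg
  have hprod_nonneg (x : α) : 0 ≤ f x ^ a * g x ^ b :=
    mul_nonneg (Real.rpow_nonneg (hf_nonneg x) a) (Real.rpow_nonneg (hg_nonneg x) b)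
  rw [← ENNReal.ofReal_le_ofReal_iff (by positivity), ENNReal.ofReal_mul (by positivity),
    ← ENNReal.ofReal_rpow_of_nonneg hIf ha, ← ENNReal.ofReal_rpow_of_nonneg hIg hb,
    ofReal_integral_eq_lintegral_ofReal hf (Eventually.of_forall hf_nonneg),
    ofReal_integral_eq_lintegral_ofReal hg (Eventually.of_forall hg_nonneg),
    ofReal_integral_eq_lintegral_ofReal
      (integrable_rpow_mul_rpow hf hg hf_nonneg hg_nonneg ha hb hab)
      (Eventually.of_forall hprod_nonneg)]
  refine le_of_eq_of_le (lintegral_congr fun x ↦ ?_) (ENNReal.lintegral_mul_norm_pow_le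
    hf.aemeasurable.ennreal_ofReal hg.aemeasurable.ennreal_ofReal ha hb hab)
  rw [ENNReal.ofReal_mul (Real.rpow_nonneg (hf_nonneg x) a),
    ENNReal.ofReal_rpow_of_nonneg (hf_nonneg x) ha, ENNReal.ofReal_rpow_of_nonneg (hg_nonneg x) hb]

variable {F : Type*} [NormedAddCommGroup F] {w : α → F} {r q : ℝ≥0}

lemma lpNorm_rpow_eq_integral_norm_rpow (hr : r ≠ 0) (hw : AEStronglyMeasurable w μ) :
    lpNorm w r μ ^ (r : ℝ) = ∫ x, ‖w x‖ ^ (r : ℝ) ∂μ := by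
  rw [lpNorm_nnreal_eq_integral_norm_rpow hr hw,
    Real.rpow_inv_rpow (integral_nonneg fun x ↦ by positivity) (by exact_mod_cast hr)]

lemma norm_rpow_rpow_mul_norm_rpow_rpow (ha : 0 ≤ a) (hb : 0 ≤ b) (v : F) :
    (‖v‖ ^ (r : ℝ)) ^ a * (‖v‖ ^ (q : ℝ)) ^ b = ‖v‖ ^ (r * a + q * b) := by
  rw [← Real.rpow_mul (norm_nonneg v), ← Real.rpow_mul (norm_nonneg v),
    Real.rpow_add_of_nonneg (norm_nonneg v) (by positivity) (by positivity)]

lemma integrable_norm_rpow_of_memLp_of_memLp (hr : r ≠ 0) (hq : q ≠ 0) (hwr : MemLp w r μ)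
    (hwq : MemLp w q μ) (ha : 0 ≤ a) (hb : 0 ≤ b) (hab : a + b = 1) :
    Integrable (fun x ↦ ‖w x‖ ^ (r * a + q * b)) μ := by
  simp only [← norm_rpow_rpow_mul_norm_rpow_rpow ha hb]
  exact integrable_rpow_mul_rpow (hwr.integrable_norm_rpow (by simpa) ENNReal.coe_ne_top)
    (hwq.integrable_norm_rpow (by simpa) ENNReal.coe_ne_top) (fun x ↦ by positivity)
    (fun x ↦ by positivity) ha hb hab

lemma integral_norm_rpow_le_lpNorm_mul_lpNorm (hr : r ≠ 0) (hq : q ≠ 0) (hwr : MemLp w r μ)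
    (hwq : MemLp w q μ) (ha : 0 ≤ a) (hb : 0 ≤ b) (hab : a + b = 1) :
    ∫ x, ‖w x‖ ^ (r * a + q * b) ∂μ ≤ lpNorm w r μ ^ (r * a) * lpNorm w q μ ^ (q * b) := by
  rw [Real.rpow_mul lpNorm_nonneg, Real.rpow_mul lpNorm_nonneg,
    lpNorm_rpow_eq_integral_norm_rpow hr hwr.aestronglyMeasurable,
    lpNorm_rpow_eq_integral_norm_rpow hq hwq.aestronglyMeasurable]
  simp only [← norm_rpow_rpow_mul_norm_rpow_rpow ha hb]
  exact integral_rpow_mul_rpow_le (hwr.integrable_norm_rpow (by simpa) ENNReal.coe_ne_top)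
    (hwq.integrable_norm_rpow (by simpa) ENNReal.coe_ne_top) (fun x ↦ by positivity)
    (fun x ↦ by positivity) ha hb hab

lemma lpNorm_two_sq (hw : AEStronglyMeasurable w μ) : lpNorm w 2 μ ^ 2 = ∫ x, ‖w x‖ ^ 2 ∂μ := by
  simpa using lpNorm_rpow_eq_integral_norm_rpow two_ne_zero hw

end Interpolation

section H1Norm

variable {E F : Type*} [NormedAddCommGroup E] [NormedSpace ℝ E] [MeasurableSpace E]
  {μ : Measure E} [NormedAddCommGroup F] [NormedSpace ℝ F] {w : E → F}

/-- The `H¹` norm `(∫ |Dw|² + |w|²)^{1/2}`, whose square is the energy in the lower bound. The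
integral is junk unless `w` and `Dw` are in `L²`. -/
def h1Norm (w : E → F) (μ : Measure E) : ℝ := √(∫ x, ‖fderiv ℝ w x‖ ^ 2 + ‖w x‖ ^ 2 ∂μ)

lemma h1Norm_nonneg : 0 ≤ h1Norm w μ := Real.sqrt_nonneg _

lemma h1Norm_sq : h1Norm w μ ^ 2 = ∫ x, ‖fderiv ℝ w x‖ ^ 2 + ‖w x‖ ^ 2 ∂μ :=
  Real.sq_sqrt (integral_nonneg fun x ↦ by positivity)

lemma h1Norm_sq_eq_add (hw2 : MemLp w 2 μ) (hdw : MemLp (fderiv ℝ w) 2 μ) :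
    h1Norm w μ ^ 2 = lpNorm (fderiv ℝ w) 2 μ ^ 2 + lpNorm w 2 μ ^ 2 := by
  rw [h1Norm_sq, lpNorm_two_sq hw2.1, lpNorm_two_sq hdw.1]
  exact integral_add (hdw.integrable_norm_pow two_ne_zero) (hw2.integrable_norm_pow two_ne_zero)

lemma lpNorm_le_h1Norm (hw2 : MemLp w 2 μ) (hdw : MemLp (fderiv ℝ w) 2 μ) :
    lpNorm w 2 μ ≤ h1Norm w μ := by
  refine le_of_sq_le_sq ?_ h1Norm_nonneg
  rw [h1Norm_sq_eq_add hw2 hdw]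
  exact le_add_of_nonneg_left (sq_nonneg _)

lemma lpNorm_fderiv_le_h1Norm (hw2 : MemLp w 2 μ) (hdw : MemLp (fderiv ℝ w) 2 μ) :
    lpNorm (fderiv ℝ w) 2 μ ≤ h1Norm w μ := by
  refine le_of_sq_le_sq ?_ h1Norm_nonneg
  rw [h1Norm_sq_eq_add hw2 hdw]
  exact le_add_of_nonneg_right (sq_nonneg _)

end H1Norm

section GagliardoNirenberg

/-- The critical Sobolev exponent `2* = 2n / (n - 2)` of `W^{1,2}(ℝⁿ)`, up to which `L^p` norms are
controlled by the energy. The subtraction in `ℝ≥0` truncates, so the value is meaningful only for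
`n ≥ 3`. -/
def criticalExponent (n : ℕ) : ℝ≥0 := 2 * n / (n - 2)

variable {n : ℕ}

lemma coe_criticalExponent (hn : 2 ≤ n) : (criticalExponent n : ℝ) = 2 * n / (n - 2) := by
  rw [criticalExponent, NNReal.coe_div, NNReal.coe_sub (by exact_mod_cast hn)]
  norm_num

lemma criticalExponent_ne_zero (hn : 3 ≤ n) : criticalExponent n ≠ 0 := by
  have : (3 : ℝ) ≤ n := by exact_mod_cast hn
  rw [← NNReal.coe_ne_zero, coe_criticalExponent (by lia)]
  exact (div_pos (by linarith) (by linarith)).ne'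

lemma inv_criticalExponent (hn : 3 ≤ n) :
    (criticalExponent n : ℝ)⁻¹ = ((2 : ℝ≥0) : ℝ)⁻¹ - (n : ℝ)⁻¹ := by
  have : (3 : ℝ) ≤ n := by exact_mod_cast hn
  have : (n : ℝ) - 2 ≠ 0 := by linarith
  rw [coe_criticalExponent (by lia), NNReal.coe_ofNat]
  field_simp

lemma exists_weights_criticalExponent (hn : 3 ≤ n) {p : ℝ}
    (hp : p ∈ Icc (2 : ℝ) (2 * n / (n - 2))) :
    ∃ a b : ℝ, 0 ≤ a ∧ 0 ≤ b ∧ a + b = 1 ∧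
      ((2 : ℝ≥0) : ℝ) * a = p - n * (p - 2) / 2 ∧ criticalExponent n * b = n * (p - 2) / 2 := by
  have hn' : (0 : ℝ) < n - 2 := by linarith [show (3 : ℝ) ≤ n by exact_mod_cast hn]
  have hp_le : p * (n - 2) ≤ 2 * n := (le_div_iff₀ hn').1 hp.2
  refine ⟨1 - (n - 2) * (p - 2) / 4, (n - 2) * (p - 2) / 4, by linarith, ?_, by ring, ?_, ?_⟩
  · exact div_nonneg (mul_nonneg hn'.le (sub_nonneg.2 hp.1)) zero_le_four
  · rw [NNReal.coe_ofNat]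
    ring
  · rw [coe_criticalExponent (by lia)]
    field_simp
    ring

variable {E F : Type*} [NormedAddCommGroup E] [NormedSpace ℝ E] [FiniteDimensional ℝ E]
  [MeasurableSpace E] [BorelSpace E] {μ : Measure E} [μ.IsAddHaarMeasure]
  [NormedAddCommGroup F] [InnerProductSpace ℝ F] {w : E → F} {p : ℝ}

lemma memLp_criticalExponent (hn : 3 ≤ finrank ℝ E) (hw : ContDiff ℝ 1 w) (hw2 : MemLp w 2 μ)
    (hdw : MemLp (fderiv ℝ w) 2 μ) : MemLp w (criticalExponent (finrank ℝ E)) μ :=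
  memLp_of_memLp_fderiv (p := 2) hw hw2 hdw one_le_two (by lia) (inv_criticalExponent hn)

lemma integrable_norm_rpow_of_memLp_fderiv (hn : 3 ≤ finrank ℝ E)
    (hp : p ∈ Icc (2 : ℝ) (2 * finrank ℝ E / (finrank ℝ E - 2))) (hw : ContDiff ℝ 1 w)
    (hw2 : MemLp w 2 μ) (hdw : MemLp (fderiv ℝ w) 2 μ) : Integrable (fun x ↦ ‖w x‖ ^ p) μ := by
  obtain ⟨a, b, ha, hb, hab, h2a, hqb⟩ := exists_weights_criticalExponent hn hp
  simpa only [h2a, hqb, sub_add_cancel] using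
    integrable_norm_rpow_of_memLp_of_memLp two_ne_zero (criticalExponent_ne_zero hn) hw2
      (memLp_criticalExponent hn hw hw2 hdw) ha hb hab

theorem integral_norm_rpow_le_lpNorm_mul_lpNorm_fderiv (hn : 3 ≤ finrank ℝ E)
    (hp : p ∈ Icc (2 : ℝ) (2 * finrank ℝ E / (finrank ℝ E - 2))) (hw : ContDiff ℝ 1 w)
    (hw2 : MemLp w 2 μ) (hdw : MemLp (fderiv ℝ w) 2 μ) :
    ∫ x, ‖w x‖ ^ p ∂μ ≤ lpNorm w 2 μ ^ (p - finrank ℝ E * (p - 2) / 2) *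
      (eLpNormLESNormFDerivOfEqInnerConst μ (2 : ℝ≥0) * lpNorm (fderiv ℝ w) 2 μ) ^
        (finrank ℝ E * (p - 2) / 2) := by
  obtain ⟨a, b, ha, hb, hab, h2a, hqb⟩ := exists_weights_criticalExponent hn hp
  have interpolation := integral_norm_rpow_le_lpNorm_mul_lpNorm two_ne_zero
    (criticalExponent_ne_zero hn) hw2 (memLp_criticalExponent hn hw hw2 hdw) ha hb hab
  have sobolev := lpNorm_le_lpNorm_fderiv_of_memLp (p := 2) hw hw2 hdw one_le_two (by lia)
    (inv_criticalExponent hn)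
  have hqb_nonneg : 0 ≤ criticalExponent (finrank ℝ E) * b := by positivity
  rw [h2a, hqb, sub_add_cancel] at interpolation
  rw [hqb] at hqb_nonneg
  exact interpolation.trans (mul_le_mul_of_nonneg_left
    (Real.rpow_le_rpow lpNorm_nonneg sobolev hqb_nonneg) (Real.rpow_nonneg lpNorm_nonneg _))

variable (F μ) in
theorem exists_integral_norm_rpow_le_lpNorm_mul_h1Norm (hn : 3 ≤ finrank ℝ E)
    (hp : p ∈ Ico (2 : ℝ) (2 * finrank ℝ E / (finrank ℝ E - 2))) :
    ∃ K a b : ℝ, 0 ≤ K ∧ 0 < a ∧ a + b = p ∧ ∀ w : E → F, ContDiff ℝ 1 w → MemLp w 2 μ →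
      MemLp (fderiv ℝ w) 2 μ → ∫ x, ‖w x‖ ^ p ∂μ ≤ K * (lpNorm w 2 μ ^ a * h1Norm w μ ^ b) := by
  have hn' : (0 : ℝ) < finrank ℝ E - 2 := by
    linarith [show (3 : ℝ) ≤ finrank ℝ E by exact_mod_cast hn]
  have hp_lt : p * (finrank ℝ E - 2) < 2 * finrank ℝ E := (lt_div_iff₀ hn').1 hp.2
  set b : ℝ := finrank ℝ E * (p - 2) / 2 with hb_def
  have hb : 0 ≤ b := div_nonneg (mul_nonneg (Nat.cast_nonneg _) (sub_nonneg.2 hp.1)) zero_le_two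
  set K : ℝ≥0 := eLpNormLESNormFDerivOfEqInnerConst μ (2 : ℝ≥0)
  refine ⟨K ^ b, p - b, b, by positivity, by rw [hb_def]; linarith, sub_add_cancel p b,
    fun w hw hw2 hdw ↦ ?_⟩
  have hm : 0 ≤ lpNorm w 2 μ ^ (p - b) := Real.rpow_nonneg lpNorm_nonneg _
  calc ∫ x, ‖w x‖ ^ p ∂μ ≤ lpNorm w 2 μ ^ (p - b) * (K * lpNorm (fderiv ℝ w) 2 μ) ^ b :=
        integral_norm_rpow_le_lpNorm_mul_lpNorm_fderiv hn (Ico_subset_Icc_self hp) hw hw2 hdw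
    _ ≤ lpNorm w 2 μ ^ (p - b) * (K * h1Norm w μ) ^ b := by
        gcongr
        exacts [mul_nonneg K.coe_nonneg lpNorm_nonneg, lpNorm_fderiv_le_h1Norm hw2 hdw]
    _ = K ^ b * (lpNorm w 2 μ ^ (p - b) * h1Norm w μ ^ b) := by
        rw [Real.mul_rpow K.coe_nonneg h1Norm_nonneg, mul_left_comm]

end GagliardoNirenberg

section LowerBound

lemma rpow_mul_rpow_le_rpow_mul_sq {m e D a b c : ℝ} (hm : 0 < m) (hme : m ≤ e) (heD : e ≤ D)
    (hca : c ≤ a) (hcab : c ≤ a + b - 2) :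
    m ^ a * e ^ b ≤ m ^ c * D ^ (a + b - 2 - c) * e ^ 2 := by
  have he : 0 < e := hm.trans_le hme
  calc m ^ a * e ^ b = m ^ c * (m ^ (a - c) * e ^ b) := by
        rw [← mul_assoc, ← Real.rpow_add hm, add_sub_cancel]
    _ ≤ m ^ c * (e ^ (a - c) * e ^ b) := by
        gcongr
    _ = m ^ c * e ^ (a + b - 2 - c) * e ^ 2 := by
        rw [← Real.rpow_add he, mul_assoc, ← Real.rpow_natCast e 2, ← Real.rpow_add he]
        push_cast
        ring_nf
    _ ≤ m ^ c * D ^ (a + b - 2 - c) * e ^ 2 := by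
        gcongr

lemma exists_pos_le_of_sq_le_add_rpow_mul_rpow {θ C D a b : ℝ} (hθ : θ ∈ Ico 0 1) (hC : 0 ≤ C)
    (hD : 0 < D) (ha : 0 < a) (hab : 2 < a + b) :
    ∃ ρ > 0, ∀ m e : ℝ, 0 < m → m ≤ e → e ≤ D → e ^ 2 ≤ θ * m ^ 2 + C * (m ^ a * e ^ b) →
      ρ ≤ m := by
  -- This choice of `c` treats `b ≤ 2` and `b ≥ 2` at once.
  set c := min a (a + b - 2)
  have hc : 0 < c := lt_min ha (by linarith)
  set A := C * D ^ (a + b - 2 - c) + 1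
  have hA : 0 < A := by positivity
  have h1θ : 0 < 1 - θ := sub_pos.2 hθ.2
  refine ⟨((1 - θ) / A) ^ c⁻¹, by positivity, fun m e hm hme heD henergy ↦ ?_⟩
  have he : 0 < e := hm.trans_le hme
  have hscaled : (1 - θ) * e ^ 2 ≤ A * m ^ c * e ^ 2 := calc
    (1 - θ) * e ^ 2 ≤ e ^ 2 - θ * m ^ 2 := by
      have : θ * m ^ 2 ≤ θ * e ^ 2 := by gcongr; exact hθ.1
      linarith
    _ ≤ C * (m ^ a * e ^ b) := by linarith
    _ ≤ C * (m ^ c * D ^ (a + b - 2 - c) * e ^ 2) :=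
      mul_le_mul_of_nonneg_left
        (rpow_mul_rpow_le_rpow_mul_sq hm hme heD (min_le_left _ _) (min_le_right _ _)) hC
    _ = (A - 1) * m ^ c * e ^ 2 := by ring
    _ ≤ A * m ^ c * e ^ 2 := by gcongr; linarith
  rw [Real.rpow_inv_le_iff_of_pos (by positivity) hm.le hc, div_le_iff₀' hA]
  exact le_of_mul_le_mul_right hscaled (by positivity)

lemma integral_abs_comp_mul_self_le {α : Type*} [MeasurableSpace α] {μ : Measure α}
    {f : ℝ → ℝ} {w : α → ℝ} {θ C p : ℝ} (hf : ∀ s, |f s * s| ≤ θ * s ^ 2 + C * |s| ^ p)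
    (hw2 : MemLp w 2 μ) (hwp : Integrable (fun x ↦ |w x| ^ p) μ) :
    ∫ x, |f (w x) * w x| ∂μ ≤ θ * ∫ x, w x ^ 2 ∂μ + C * ∫ x, |w x| ^ p ∂μ := by
  have hw2' := hw2.integrable_sq.const_mul θ
  have hwp' := hwp.const_mul C
  rw [← integral_const_mul, ← integral_const_mul, ← integral_add hw2' hwp']
  exact integral_mono_of_nonneg (Eventually.of_forall fun x ↦ abs_nonneg _) (hw2'.add hwp')
    (Eventually.of_forall fun x ↦ hf (w x))

lemma norm_gradient {E : Type*} [NormedAddCommGroup E] [InnerProductSpace ℝ E] [CompleteSpace E]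
    (w : E → ℝ) (x : E) : ‖gradient w x‖ = ‖fderiv ℝ w x‖ :=
  LinearIsometryEquiv.norm_map _ _

theorem lower_L2_bound_general {E F : Type*} [NormedAddCommGroup E] [NormedSpace ℝ E]
    [FiniteDimensional ℝ E] [MeasurableSpace E] [BorelSpace E] (μ : Measure E)
    [μ.IsAddHaarMeasure] [NormedAddCommGroup F] [InnerProductSpace ℝ F]
    (hn : 3 ≤ finrank ℝ E) {p : ℝ}
    (hp : p ∈ Ioo (2 : ℝ) (2 * finrank ℝ E / (finrank ℝ E - 2))) {θ C D : ℝ}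
    (hθ : θ ∈ Ico 0 1) (hC : 0 ≤ C) (hD : 0 < D) :
    ∃ ρ > 0, ∀ w : E → F, ContDiff ℝ 1 w → MemLp w 2 μ → MemLp (fderiv ℝ w) 2 μ →
      ∫ x, ‖fderiv ℝ w x‖ ^ 2 + ‖w x‖ ^ 2 ∂μ ≤ D ^ 2 →
      ∫ x, ‖fderiv ℝ w x‖ ^ 2 + ‖w x‖ ^ 2 ∂μ ≤
        θ * ∫ x, ‖w x‖ ^ 2 ∂μ + C * ∫ x, ‖w x‖ ^ p ∂μ →
      w =ᵐ[μ] 0 ∨ ρ ≤ √(∫ x, ‖w x‖ ^ 2 ∂μ) := by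
  obtain ⟨K, a, b, hK, ha, hab, gagliardo_nirenberg⟩ :=
    exists_integral_norm_rpow_le_lpNorm_mul_h1Norm F μ hn (Ioo_subset_Ico_self hp)
  obtain ⟨ρ, hρ, hρ_le⟩ :=
    exists_pos_le_of_sq_le_add_rpow_mul_rpow hθ (mul_nonneg hC hK) hD ha (hab ▸ hp.1)
  refine ⟨ρ, hρ, fun w hw hw2 hdw henergy_le henergy ↦ or_iff_not_imp_left.2 fun hw0 ↦ ?_⟩
  rw [← h1Norm_sq, ← lpNorm_two_sq hw2.1] at henergy
  rw [← h1Norm_sq] at henergy_le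
  rw [← lpNorm_two_sq hw2.1, Real.sqrt_sq lpNorm_nonneg]
  have hm : 0 < lpNorm w 2 μ := lpNorm_nonneg.lt_of_ne' (mt (lpNorm_eq_zero hw2 two_ne_zero).1 hw0)
  refine hρ_le _ _ hm (lpNorm_le_h1Norm hw2 hdw) (le_of_sq_le_sq henergy_le hD.le)
    (henergy.trans ?_)
  rw [mul_assoc C K]
  gcongr
  exact gagliardo_nirenberg w hw hw2 hdw

end LowerBound

/-- **Lemma 2.6, case `N ≥ 3`.** Given `N ≥ 3`, `p ∈ (2, 2N/(N−2))` and constants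
`C₁, D > 0`, there is `ρ₂ > 0` depending only on `N, p, C₁, D` such that: for every continuous
`f` with `|f(s)s| ≤ (1/4)s² + C₁|s|^p`, every `C¹` function `w` with `w, |∇w| ∈ L²(ℝ^N)`,
`∫(|∇w|² + w²) ≤ D²` and `∫(|∇w|² + w²) ≤ ∫|f(w)w|`, either `w = 0` a.e. or
`(∫w²)^{1/2} ≥ ρ₂`. -/
theorem lower_L2_bound (N : ℕ) (hN : 3 ≤ N) (p : ℝ)
    (hp : p ∈ Set.Ioo (2:ℝ) (2 * (N : ℝ) / ((N : ℝ) - 2)))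
    (C₁ D : ℝ) (hC₁ : 0 < C₁) (hD : 0 < D) :
    ∃ ρ₂ > (0:ℝ), ∀ f : ℝ → ℝ, Continuous f →
      (∀ s : ℝ, |f s * s| ≤ 1 / 4 * s ^ 2 + C₁ * |s| ^ p) →
      ∀ w : EuclideanSpace ℝ (Fin N) → ℝ, ContDiff ℝ 1 w →
        MemLp w 2 volume → MemLp (fun x => ‖gradient w x‖) 2 volume →
        (∫ x, ‖gradient w x‖ ^ 2 + w x ^ 2) ≤ D ^ 2 →
        (∫ x, ‖gradient w x‖ ^ 2 + w x ^ 2) ≤ (∫ x, |f (w x) * w x|) →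
        (w =ᵐ[volume] 0) ∨ ρ₂ ≤ Real.sqrt (∫ x, w x ^ 2) := by
  have hn : finrank ℝ (EuclideanSpace ℝ (Fin N)) = N := finrank_euclideanSpace_fin
  obtain ⟨ρ, hρ, hρ_le⟩ := lower_L2_bound_general (F := ℝ)
    (volume : Measure (EuclideanSpace ℝ (Fin N))) (hn.symm ▸ hN) (hn.symm ▸ hp)
    (θ := 1 / 4) (by norm_num) hC₁.le hD
  refine ⟨ρ, hρ, fun f _ hf w hw hw2 hgrad henergy_le henergy ↦ ?_⟩
  simp only [norm_gradient] at hgrad henergy_le henergy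
  have hdw : MemLp (fderiv ℝ w) 2 volume :=
    (memLp_norm_iff (hw.continuous_fderiv one_ne_zero).aestronglyMeasurable).1 hgrad
  have hwp := integrable_norm_rpow_of_memLp_fderiv (hn.symm ▸ hN)
    (Ioo_subset_Icc_self (hn.symm ▸ hp)) hw hw2 hdw
  simpa only [Real.norm_eq_abs, sq_abs] using hρ_le w hw hw2 hdw (by simpa using henergy_le)
    (by simpa using henergy.trans (integral_abs_comp_mul_self_le hf hw2 hwp))
end
end

section
/- Let N ≥ 1, let f : ℝ → ℝ be continuous, and set F(s) = ∫₀^s f(t) dt. Let u : ℝ^N → ℝ be continuously differentiable and let ψ : ℝ^N → ℝ be continuously differentiable with compact support. Then ∫_{ℝ^N} f(u(x)) ∂₁(ψ u)(x) dx = ∫_{ℝ^N} ∂₁ψ(x) ( f(u(x)) u(x) − F(u(x)) ) dx, where ∂₁ denotes the partial derivative in the first coordinate direction. -/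
open MeasureTheory Filter Set Real

noncomputable section

/-- The partial derivative in the first coordinate direction on `ℝ^N` (`N ≥ 1`). -/
def pd1 (N : ℕ) (hN : 1 ≤ N) (g : EuclideanSpace ℝ (Fin N) → ℝ)
    (x : EuclideanSpace ℝ (Fin N)) : ℝ :=
  fderiv ℝ g x (EuclideanSpace.single (⟨0, hN⟩ : Fin N) (1 : ℝ))

/-! The product and chain rules give `f(u) ∂ᵥ(ψu) = ∂ᵥψ (f(u)u − F(u)) + ∂ᵥ(ψ F(u))`, and the last
term integrates to zero because `ψ F(u)` is `C¹` with compact support. The same computation works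
for vector-valued `u` and `F`, with the derivative `F'(u)` applied to vectors in place of
multiplication by `f(u)`. -/

section General

variable {E G H : Type*} [NormedAddCommGroup E] [NormedSpace ℝ E]
  [NormedAddCommGroup G] [NormedSpace ℝ G] [NormedAddCommGroup H] [NormedSpace ℝ H]

theorem fderiv_apply_fderiv_fun_smul {F : H → G} {u : E → H} {ψ : E → ℝ} {x : E}
    (hF : DifferentiableAt ℝ F (u x)) (hu : DifferentiableAt ℝ u x)
    (hψ : DifferentiableAt ℝ ψ x) (v : E) :
    fderiv ℝ F (u x) (fderiv ℝ (fun y ↦ ψ y • u y) x v)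
      = fderiv ℝ ψ x v • (fderiv ℝ F (u x) (u x) - F (u x))
        + fderiv ℝ (fun y ↦ ψ y • F (u y)) x v := by
  have chain : fderiv ℝ (fun y ↦ F (u y)) x = (fderiv ℝ F (u x)).comp (fderiv ℝ u x) :=
    fderiv_comp x hF hu
  have hFu : DifferentiableAt ℝ (fun y ↦ F (u y)) x := hF.comp x hu
  simp only [fderiv_fun_smul hψ hu, fderiv_fun_smul hψ hFu, chain, add_apply, smul_apply,
    ContinuousLinearMap.smulRight_apply, ContinuousLinearMap.comp_apply, map_add, map_smul,
    smul_sub]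
  abel

variable [MeasurableSpace E] {μ : Measure E}

theorem integrable_fderiv_apply_of_hasCompactSupport [OpensMeasurableSpace E]
    [IsFiniteMeasureOnCompacts μ] {φ : E → G} (hφ : ContDiff ℝ 1 φ) (hφ_supp : HasCompactSupport φ)
    (v : E) :
    Integrable (fun x ↦ fderiv ℝ φ x v) μ :=
  ((hφ.continuous_fderiv one_ne_zero).clm_apply continuous_const).integrable_of_hasCompactSupport
    (hφ_supp.fderiv_apply ℝ v)

variable [BorelSpace E] [FiniteDimensional ℝ E] [μ.IsAddHaarMeasure]

theorem integral_fderiv_apply_eq_zero {φ : E → G} {v : E} (hφ : Differentiable ℝ φ)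
    (hφ_int : Integrable φ μ) (hφ'_int : Integrable (fun x ↦ fderiv ℝ φ x v) μ) :
    ∫ x, fderiv ℝ φ x v ∂μ = 0 := by
  simpa using integral_smul_fderiv_eq_neg_fderiv_smul_of_integrable (μ := μ)
    (f := fun _ ↦ (1 : ℝ)) (g := φ) (v := v) (by simp) (by simpa using hφ'_int)
    (by simpa using hφ_int) (by simp) (fun x _ ↦ hφ x)

theorem ibp_nonlinear_term_general {F : H → G} (hF : ContDiff ℝ 1 F) {u : E → H}
    (hu : ContDiff ℝ 1 u) {ψ : E → ℝ} (hψ : ContDiff ℝ 1 ψ) (hψ_supp : HasCompactSupport ψ)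
    (v : E) :
    ∫ x, fderiv ℝ F (u x) (fderiv ℝ (fun y ↦ ψ y • u y) x v) ∂μ
      = ∫ x, fderiv ℝ ψ x v • (fderiv ℝ F (u x) (u x) - F (u x)) ∂μ := by
  have hψF : ContDiff ℝ 1 fun x ↦ ψ x • F (u x) := hψ.smul (hF.comp hu)
  have hψF_supp : HasCompactSupport fun x ↦ ψ x • F (u x) := hψ_supp.smul_right
  have hψF'_int : Integrable (fun x ↦ fderiv ℝ (fun y ↦ ψ y • F (u y)) x v) μ :=
    integrable_fderiv_apply_of_hasCompactSupport hψF hψF_supp v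
  have hrhs_cont : Continuous fun x ↦ fderiv ℝ ψ x v • (fderiv ℝ F (u x) (u x) - F (u x)) :=
    ((hψ.continuous_fderiv one_ne_zero).clm_apply continuous_const).smul
      ((((hF.continuous_fderiv one_ne_zero).comp hu.continuous).clm_apply hu.continuous).sub
        (hF.continuous.comp hu.continuous))
  have hrhs_int : Integrable (fun x ↦ fderiv ℝ ψ x v • (fderiv ℝ F (u x) (u x) - F (u x))) μ :=
    hrhs_cont.integrable_of_hasCompactSupport (hψ_supp.fderiv_apply ℝ v).smul_right
  calc
    _ = ∫ x, (fderiv ℝ ψ x v • (fderiv ℝ F (u x) (u x) - F (u x))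
          + fderiv ℝ (fun y ↦ ψ y • F (u y)) x v) ∂μ :=
      integral_congr_ae <| .of_forall fun x ↦ fderiv_apply_fderiv_fun_smul
        (hF.differentiable one_ne_zero _) (hu.differentiable one_ne_zero _)
        (hψ.differentiable one_ne_zero _) v
    _ = _ := by
      rw [integral_add hrhs_int hψF'_int,
        integral_fderiv_apply_eq_zero (hψF.differentiable one_ne_zero)
          (hψF.continuous.integrable_of_hasCompactSupport hψF_supp) hψF'_int, add_zero]

end General

theorem deriv_primF {f : ℝ → ℝ} (hf : Continuous f) : deriv (primF f) = f :=
  funext (hf.deriv_integral f 0)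

theorem contDiff_one_primF {f : ℝ → ℝ} (hf : Continuous f) : ContDiff ℝ 1 (primF f) :=
  contDiff_one_iff_deriv.2 ⟨fun s ↦ (hf.integral_hasStrictDerivAt 0 s).hasDerivAt.differentiableAt,
    (deriv_primF hf).symm ▸ hf⟩

/-- **Integration-by-parts identity for the nonlinear term (Proposition 3.3).**
Testing `f(u)` against `∂₁(ψu)` leaves only a term involving `∂₁ψ`:
`∫ f(u) ∂₁(ψu) = ∫ ∂₁ψ (f(u)u − F(u))`. -/
theorem ibp_nonlinear_term (N : ℕ) (hN : 1 ≤ N)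
    (f : ℝ → ℝ) (hf_cont : Continuous f)
    (u : EuclideanSpace ℝ (Fin N) → ℝ) (hu : ContDiff ℝ 1 u)
    (ψ : EuclideanSpace ℝ (Fin N) → ℝ) (hψ : ContDiff ℝ 1 ψ)
    (hψ_supp : HasCompactSupport ψ) :
    ∫ x, f (u x) * pd1 N hN (fun y => ψ y * u y) x
      = ∫ x, pd1 N hN ψ x * (f (u x) * u x - primF f (u x)) := by
  simpa [pd1, deriv_primF hf_cont, fderiv_eq_deriv_mul, mul_comm] using
    ibp_nonlinear_term_general (contDiff_one_primF hf_cont) hu hψ hψ_supp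
      (EuclideanSpace.single ⟨0, hN⟩ 1)
end
end
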